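/- Let l_1,…,l_n and r_1,…,r_n be d-dimensional bit vectors and let ℓ ≥ 1, p ∈ {0,1}, q ≥ 0 be integers, and let G = G_{L,R,ℓ,p,q}. For every 1 ≤ i ≤ n and every 1 ≤ k ≤ d, dist_G(u_i^L, w_k^L) ≥ 2ℓ − p and dist_G(u_i^R, w_k^R) ≥ 2ℓ − p. -/

import Mathlib

namespace GraphOV

/-- Two bit vectors (functions into `Fin 2`) are orthogonal if in every coordinate
at least one of them is `0`. -/
def Orth {d : ℕ} (a b : Fin d → Fin 2) : Prop := ∀ k, a k = 0 ∨ b k = 0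

/-- A system of internally disjoint paths joining exterior vertices from `E`:
for each path name `i : ι` we record its two endpoints and its length. -/
structure PathSys (E : Type) (ι : Type) where
  src : ι → E
  dst : ι → E
  len : ι → ℕ

namespace PathSys

variable {E ι : Type}

/-- Endpoints of zero-length paths get identified. -/
def idRel (S : PathSys E ι) (a b : E) : Prop :=
  ∃ i, S.len i = 0 ∧ S.src i = a ∧ S.dst i = b

/-- Vertices of the glued graph: exterior vertices (up to identification) together
with, for each path of length `m`, fresh interior vertices at positions `1,…,m-1`. -/
def Vert (S : PathSys E ι) : Type :=
  Quot S.idRel ⊕ Σ i : ι, {t : ℕ // 0 < t ∧ t < S.len i}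

/-- The vertex corresponding to an exterior vertex. -/
def ext (S : PathSys E ι) (a : E) : S.Vert := Sum.inl (Quot.mk _ a)

/-- The `t`-th vertex on the path named `i` (for `0 ≤ t ≤ S.len i`). -/
def pt (S : PathSys E ι) (i : ι) (t : ℕ) : S.Vert :=
  if h : 0 < t ∧ t < S.len i then Sum.inr ⟨i, t, h⟩
  else if t = 0 then S.ext (S.src i) else S.ext (S.dst i)

/-- The glued graph: consecutive vertices on each path are adjacent. -/
def graph (S : PathSys E ι) : SimpleGraph S.Vert :=
  SimpleGraph.fromRel fun a b =>
    ∃ i t, t + 1 ≤ S.len i ∧ a = S.pt i t ∧ b = S.pt i (t + 1)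

/-- The set of vertices lying on the path named `i`. -/
def onPath (S : PathSys E ι) (i : ι) : Set S.Vert :=
  {v | ∃ t ≤ S.len i, v = S.pt i t}

/-- A walk in the glued graph contains the path named `i` entirely if all vertices of
that path occur consecutively (in forward or backward order) on the walk. -/
def WalkContainsPath (S : PathSys E ι) {x y : S.Vert} (W : S.graph.Walk x y) (i : ι) : Prop :=
  ∃ a, a + S.len i ≤ W.length ∧
    ((∀ t ≤ S.len i, W.getVert (a + t) = S.pt i t) ∨
     (∀ t ≤ S.len i, W.getVert (a + t) = S.pt i (S.len i - t)))

end PathSys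

/-- The exterior vertices of the graph `G_{L,R,ℓ,p,q}`. -/
inductive Ext (n d : ℕ) : Type
  | uL : Fin n → Ext n d
  | uR : Fin n → Ext n d
  | vL : Fin n → Ext n d
  | vR : Fin n → Ext n d
  | wL : Fin d → Ext n d
  | wR : Fin d → Ext n d
  | xL : Ext n d
  | xR : Ext n d
  | yL : Ext n d
  | yR : Ext n d

/-- Names for the paths of the graph `G_{L,R,ℓ,p,q}`. -/
inductive Idx (n d : ℕ) (l r : Fin n → Fin d → Fin 2) : Type
  | uvL : Fin n → Idx n d l r
  | uvR : Fin n → Idx n d l r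
  | vxL : Fin n → Idx n d l r
  | vxR : Fin n → Idx n d l r
  | vwL : (i : Fin n) → (k : Fin d) → l i k = 1 → Idx n d l r
  | vwR : (j : Fin n) → (k : Fin d) → r j k = 1 → Idx n d l r
  | ywL : Fin d → Idx n d l r
  | ywR : Fin d → Idx n d l r
  | ww : Fin d → Idx n d l r
  | xyL : Idx n d l r
  | xyR : Idx n d l r
  | yy : Idx n d l r

/-- The path system defining the graph `G_{L,R,ℓ,p,q}`. -/
def sys (n d : ℕ) (l r : Fin n → Fin d → Fin 2) (ℓ p q : ℕ) :
    PathSys (Ext n d) (Idx n d l r) where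
  src := fun i => match i with
    | .uvL i => .uL i
    | .uvR i => .uR i
    | .vxL i => .vL i
    | .vxR i => .vR i
    | .vwL i _ _ => .vL i
    | .vwR j _ _ => .vR j
    | .ywL _ => .yL
    | .ywR _ => .yR
    | .ww k => .wL k
    | .xyL => .xL
    | .xyR => .xR
    | .yy => .yL
  dst := fun i => match i with
    | .uvL i => .vL i
    | .uvR i => .vR i
    | .vxL _ => .xL
    | .vxR _ => .xR
    | .vwL _ k _ => .wL k
    | .vwR _ k _ => .wR k
    | .ywL k => .wL k
    | .ywR k => .wR k
    | .ww k => .wR k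
    | .xyL => .yL
    | .xyR => .yR
    | .yy => .yR
  len := fun i => match i with
    | .uvL _ => ℓ - p
    | .uvR _ => ℓ - p
    | .vxL _ => ℓ
    | .vxR _ => ℓ
    | .vwL _ _ _ => ℓ
    | .vwR _ _ _ => ℓ
    | .ywL _ => ℓ
    | .ywR _ => ℓ
    | .ww _ => q
    | .xyL => ℓ - p
    | .xyR => ℓ - p
    | .yy => p + q

/-- The set `P_i^L`. -/
def PL (n d : ℕ) (l r : Fin n → Fin d → Fin 2) (ℓ p q : ℕ) (i : Fin n) :
    Set (sys n d l r ℓ p q).Vert :=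
  (sys n d l r ℓ p q).onPath (.uvL i) ∪
    ((sys n d l r ℓ p q).onPath (.vxL i) \ {(sys n d l r ℓ p q).ext .xL}) ∪
    ⋃ (k : Fin d) (h : l i k = 1),
      ((sys n d l r ℓ p q).onPath (.vwL i k h) \ {(sys n d l r ℓ p q).ext (.wL k)})

/-- The set `P_j^R`. -/
def PR (n d : ℕ) (l r : Fin n → Fin d → Fin 2) (ℓ p q : ℕ) (j : Fin n) :
    Set (sys n d l r ℓ p q).Vert :=
  (sys n d l r ℓ p q).onPath (.uvR j) ∪
    ((sys n d l r ℓ p q).onPath (.vxR j) \ {(sys n d l r ℓ p q).ext .xR}) ∪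
    ⋃ (k : Fin d) (h : r j k = 1),
      ((sys n d l r ℓ p q).onPath (.vwR j k h) \ {(sys n d l r ℓ p q).ext (.wR k)})

/-- The set `V^L`. -/
def VL (n d : ℕ) (l r : Fin n → Fin d → Fin 2) (ℓ p q : ℕ) :
    Set (sys n d l r ℓ p q).Vert := ⋃ i : Fin n, PL n d l r ℓ p q i

/-- The set `V^R`. -/
def VR (n d : ℕ) (l r : Fin n → Fin d → Fin 2) (ℓ p q : ℕ) :
    Set (sys n d l r ℓ p q).Vert := ⋃ j : Fin n, PR n d l r ℓ p q j

/-- The set `V^M` of all remaining vertices. -/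
def VM (n d : ℕ) (l r : Fin n → Fin d → Fin 2) (ℓ p q : ℕ) :
    Set (sys n d l r ℓ p q).Vert := (VL n d l r ℓ p q ∪ VR n d l r ℓ p q)ᶜ

/-!
A function on the exterior vertices that changes by at most the length of a path along that path
extends to the whole glued graph as a function that changes by at most one along every edge, so
its increments bound distances from below. Giving `u` the value `0`, its only neighbouring exterior
vertex `v` the value `ℓ - p`, and every other exterior vertex the value `(ℓ - p) + ℓ` yields the
claim.
-/

section Lipschitz

variable {V : Type*} {G : SimpleGraph V} {f : V → ℕ} {x y : V}

theorem le_add_length_of_forall_adj (hf : ∀ ⦃x y⦄, G.Adj x y → f y ≤ f x + 1) (W : G.Walk x y) :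
    f y ≤ f x + W.length := by
  induction W with
  | nil => exact le_rfl
  | cons hadj W ih =>
    have hstep := hf hadj
    rw [SimpleGraph.Walk.length_cons]
    omega

theorem le_add_dist_of_forall_adj (hf : ∀ ⦃x y⦄, G.Adj x y → f y ≤ f x + 1)
    (hxy : G.Reachable x y) : f y ≤ f x + G.dist x y := by
  obtain ⟨W, hW⟩ := hxy.exists_walk_length_eq_dist
  exact hW ▸ le_add_length_of_forall_adj hf W

end Lipschitz

namespace PathSys

section Graph

variable {E ι : Type} (S : PathSys E ι)

theorem pt_zero (i : ι) : S.pt i 0 = S.ext (S.src i) := by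
  simp [pt]

theorem pt_len (i : ι) : S.pt i (S.len i) = S.ext (S.dst i) := by
  by_cases h : S.len i = 0
  · rw [h, pt_zero]
    exact congrArg Sum.inl (Quot.sound ⟨i, h, rfl, rfl⟩)
  · simp [pt, h]

theorem pt_of_pos_of_lt {i : ι} {t : ℕ} (h : 0 < t ∧ t < S.len i) :
    S.pt i t = Sum.inr ⟨i, t, h⟩ :=
  dif_pos h

theorem reachable_pt_succ {i : ι} {t : ℕ} (ht : t + 1 ≤ S.len i) :
    S.graph.Reachable (S.pt i t) (S.pt i (t + 1)) := by
  by_cases h : S.pt i t = S.pt i (t + 1)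
  · rw [h]
  · exact SimpleGraph.Adj.reachable
      ((SimpleGraph.fromRel_adj _ _ _).2 ⟨h, Or.inl ⟨i, t, ht, rfl, rfl⟩⟩)

theorem reachable_src_pt {i : ι} {t : ℕ} (ht : t ≤ S.len i) :
    S.graph.Reachable (S.ext (S.src i)) (S.pt i t) := by
  induction t with
  | zero => rw [pt_zero]
  | succ t ih => exact (ih (Nat.le_of_succ_le ht)).trans (S.reachable_pt_succ ht)

theorem reachable_src_dst (i : ι) :
    S.graph.Reachable (S.ext (S.src i)) (S.ext (S.dst i)) := by
  rw [← pt_len]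
  exact S.reachable_src_pt le_rfl

end Graph

section Potential

variable {E ι : Type} {S : PathSys E ι} {F : E → ℕ}

/-- A potential on the exterior vertices: its values at the two ends of a path differ by at most
the length of the path. Both bounds are stated additively to avoid truncated subtraction. -/
def IsPotential (S : PathSys E ι) (F : E → ℕ) : Prop :=
  ∀ i, F (S.dst i) ≤ F (S.src i) + S.len i ∧ F (S.src i) ≤ F (S.dst i) + S.len i

/-- The largest extension of a potential to all vertices that changes by at most one along each
edge: an interior vertex takes the smaller of the two values reached from the ends of its path. -/
def IsPotential.extend (hF : S.IsPotential F) : S.Vert → ℕ :=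
  Sum.elim
    (Quot.lift F (by
      rintro _ _ ⟨i, hi, rfl, rfl⟩
      have := hF i
      omega))
    (fun x => min (F (S.src x.1) + x.2.1) (F (S.dst x.1) + (S.len x.1 - x.2.1)))

theorem IsPotential.extend_ext (hF : S.IsPotential F) (a : E) : hF.extend (S.ext a) = F a :=
  rfl

theorem IsPotential.extend_pt (hF : S.IsPotential F) {i : ι} {t : ℕ} (ht : t ≤ S.len i) :
    hF.extend (S.pt i t) = min (F (S.src i) + t) (F (S.dst i) + (S.len i - t)) := by
  have hi := hF i
  rcases t.eq_zero_or_pos with rfl | hpos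
  · rw [pt_zero, hF.extend_ext]
    omega
  rcases ht.eq_or_lt with rfl | hlt
  · rw [pt_len, hF.extend_ext]
    omega
  · rw [S.pt_of_pos_of_lt ⟨hpos, hlt⟩]
    rfl

theorem IsPotential.extend_le_of_adj (hF : S.IsPotential F) ⦃x y : S.Vert⦄
    (h : S.graph.Adj x y) : hF.extend y ≤ hF.extend x + 1 := by
  rw [graph, SimpleGraph.fromRel_adj] at h
  rcases h with ⟨-, ⟨i, t, ht, rfl, rfl⟩ | ⟨i, t, ht, rfl, rfl⟩⟩ <;>
  · rw [hF.extend_pt ht, hF.extend_pt (Nat.le_of_succ_le ht)]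
    omega

theorem IsPotential.le_add_dist (hF : S.IsPotential F) {a b : E}
    (hab : S.graph.Reachable (S.ext a) (S.ext b)) :
    F b ≤ F a + S.graph.dist (S.ext a) (S.ext b) :=
  le_add_dist_of_forall_adj hF.extend_le_of_adj hab

end Potential

section Pendant

variable {E ι : Type} {S : PathSys E ι}

/-- The unordered pair of endpoints of a path. -/
def ends (S : PathSys E ι) (i : ι) : Sym2 E :=
  s(S.src i, S.dst i)

theorem add_le_dist_of_pendant {u v w : E} {a b : ℕ}
    (hu : ∀ i, u ∈ S.ends i → S.ends i = s(u, v) ∧ a ≤ S.len i)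
    (hv : ∀ i, v ∈ S.ends i → u ∉ S.ends i → b ≤ S.len i)
    (hwu : w ≠ u) (hwv : w ≠ v) (huw : S.graph.Reachable (S.ext u) (S.ext w)) :
    a + b ≤ S.graph.dist (S.ext u) (S.ext w) := by
  classical
  let F : E → ℕ := fun e => if e = u then 0 else if e = v then a else a + b
  have hF : S.IsPotential F := by
    intro i
    have hui := hu i
    have hvi := hv i
    simp only [ends, Sym2.mem_iff, Sym2.eq_iff] at hui hvi
    grind
  simpa [F, hwu, hwv] using hF.le_add_dist huw

end Pendant

end PathSys

section Sys

variable {n d : ℕ} (l r : Fin n → Fin d → Fin 2) (ℓ p q : ℕ) (i : Fin n) (k : Fin d)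

theorem reachable_uL_wL :
    (sys n d l r ℓ p q).graph.Reachable ((sys n d l r ℓ p q).ext (.uL i))
      ((sys n d l r ℓ p q).ext (.wL k)) :=
  let S := sys n d l r ℓ p q
  (S.reachable_src_dst (.uvL i)).trans <| (S.reachable_src_dst (.vxL i)).trans <|
    (S.reachable_src_dst .xyL).trans (S.reachable_src_dst (.ywL k))

theorem reachable_uR_wR :
    (sys n d l r ℓ p q).graph.Reachable ((sys n d l r ℓ p q).ext (.uR i))
      ((sys n d l r ℓ p q).ext (.wR k)) :=
  let S := sys n d l r ℓ p q
  (S.reachable_src_dst (.uvR i)).trans <| (S.reachable_src_dst (.vxR i)).trans <|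
    (S.reachable_src_dst .xyR).trans (S.reachable_src_dst (.ywR k))

theorem le_dist_uL_wL :
    ℓ - p + ℓ ≤ (sys n d l r ℓ p q).graph.dist ((sys n d l r ℓ p q).ext (.uL i))
      ((sys n d l r ℓ p q).ext (.wL k)) := by
  refine PathSys.add_le_dist_of_pendant (v := .vL i) ?_ ?_ nofun nofun
    (reachable_uL_wL l r ℓ p q i k) <;>
  · intro j
    cases j <;> simp +contextual [PathSys.ends, sys]

theorem le_dist_uR_wR :
    ℓ - p + ℓ ≤ (sys n d l r ℓ p q).graph.dist ((sys n d l r ℓ p q).ext (.uR i))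
      ((sys n d l r ℓ p q).ext (.wR k)) := by
  refine PathSys.add_le_dist_of_pendant (v := .vR i) ?_ ?_ nofun nofun
    (reachable_uR_wR l r ℓ p q i k) <;>
  · intro j
    cases j <;> simp +contextual [PathSys.ends, sys]

end Sys

theorem dist_u_to_w_general (n d ℓ p q : ℕ) (hpℓ : p ≤ ℓ) (l r : Fin n → Fin d → Fin 2)
    (i : Fin n) (k : Fin d) :
    2 * ℓ - p ≤ (sys n d l r ℓ p q).graph.dist ((sys n d l r ℓ p q).ext (.uL i))
        ((sys n d l r ℓ p q).ext (.wL k)) ∧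
      2 * ℓ - p ≤ (sys n d l r ℓ p q).graph.dist ((sys n d l r ℓ p q).ext (.uR i))
        ((sys n d l r ℓ p q).ext (.wR k)) := by
  rw [two_mul, Nat.sub_add_comm hpℓ]
  exact ⟨le_dist_uL_wL l r ℓ p q i k, le_dist_uR_wR l r ℓ p q i k⟩

theorem dist_u_to_w (n d ℓ p q : ℕ) (hn : 1 ≤ n) (hd : 1 ≤ d) (hℓ : 1 ≤ ℓ)
    (hp : p ≤ 1) (l r : Fin n → Fin d → Fin 2) :
    ∀ (i : Fin n) (k : Fin d),
      2 * ℓ - p ≤ (sys n d l r ℓ p q).graph.dist ((sys n d l r ℓ p q).ext (.uL i))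
        ((sys n d l r ℓ p q).ext (.wL k)) ∧
      2 * ℓ - p ≤ (sys n d l r ℓ p q).graph.dist ((sys n d l r ℓ p q).ext (.uR i))
        ((sys n d l r ℓ p q).ext (.wR k)) :=
  dist_u_to_w_general n d ℓ p q (hp.trans hℓ) l r

end GraphOV
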